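/- arXiv:2007.02405 — 3 statements merged into one kernel-verified Lean document; each statement's English description precedes it below -/
import Mathlib

section
/- For all natural numbers w, v, m with v + 1 ≤ w, the following identity holds in ℤ: ∑_{j=0}^{m} (-1)^j · C(w,j) · C(w-j, v) = (-1)^m · C(w,v) · C(w-v-1, m). -/
theorem choose_mul_choose_sub_comm (n k l : ℕ) :
    n.choose k * (n - k).choose l = n.choose l * (n - l).choose k := by
  calc n.choose k * (n - k).choose l
      = n.choose (k + l) * (k + l).choose k := by
        rw [Nat.choose_mul (Nat.le_add_right k l), Nat.add_sub_cancel_left]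
    _ = n.choose (k + l) * (k + l).choose l := by rw [Nat.choose_symm_add]
    _ = n.choose l * (n - l).choose k := by
        rw [Nat.choose_mul (Nat.le_add_left l k), Nat.add_sub_cancel_right]

/-- For all natural numbers `w, v, m` with `v + 1 ≤ w`, the identity
`∑_{j=0}^{m} (-1)^j C(w,j) C(w-j,v) = (-1)^m C(w,v) C(w-v-1,m)` holds in `ℤ`. -/
theorem sum_alternating_choose_mul_choose (w v m : ℕ) (h : v + 1 ≤ w) :
    ∑ j ∈ Finset.range (m + 1),
        (-1 : ℤ) ^ j * (w.choose j : ℤ) * ((w - j).choose v : ℤ) =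
      (-1 : ℤ) ^ m * (w.choose v : ℤ) * ((w - v - 1).choose m : ℤ) := by
  have term_eq (j : ℕ) : (-1 : ℤ) ^ j * w.choose j * (w - j).choose v =
      w.choose v * ((-1) ^ j * (w - v).choose j) := by
    rw [mul_assoc, ← Nat.cast_mul, choose_mul_choose_sub_comm, Nat.cast_mul, mul_left_comm]
  have sub_add_one : w - v - 1 + 1 = w - v := by lia
  calc ∑ j ∈ Finset.range (m + 1), (-1 : ℤ) ^ j * w.choose j * (w - j).choose v
      = w.choose v * ∑ j ∈ Finset.range (m + 1), (-1) ^ j * ((w - v).choose j : ℤ) := by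
        simp_rw [term_eq, Finset.mul_sum]
    _ = w.choose v * ((-1) ^ m * (w - v - 1).choose m) := by
        rw [← sub_add_one, Int.alternating_sum_range_choose_eq_choose, Nat.add_sub_cancel]
    _ = (-1) ^ m * w.choose v * (w - v - 1).choose m := by ring
end

section
/- Let C be an [n, k, d]_q MDS code with minimum distance d ≥ 3, and let w be a natural number with d - 1 ≤ w ≤ n. Then the overall number A_w^Σ(V^{≤1}) of Hamming-weight-w vectors lying in cosets of C of weight at most 1 satisfies A_w^Σ(V^{≤1}) = C(n,w) · [ ∑_{j=0}^{w-d} (-1)^j C(w,j) ( q^{w-d+1-j}(1 + n(q-1)) - 1 - (w-j)(q-1) ) - ε · C(w, d-1) · (n-d+1)(q-1) ], as an identity of integers. -/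
open Finset

/-- The weight of the coset `x + C` of the linear code `C ⊆ F_q^n`, i.e. the smallest
Hamming weight of a vector in `x + C`; equivalently the Hamming distance from `x` to `C`. -/
noncomputable def cosetWeight {F : Type*} [Field F] [Fintype F] [DecidableEq F] {n : ℕ}
    (C : Submodule F (Fin n → F)) (x : Fin n → F) : ℕ :=
  sInf {m : ℕ | ∃ c ∈ C, hammingNorm (x - c) = m}

/-- `A_w(C)`: the number of codewords of `C` of Hamming weight `w`. -/
noncomputable def numCodewordsOfWeight {F : Type*} [Field F] [Fintype F] [DecidableEq F] {n : ℕ}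
    (C : Submodule F (Fin n → F)) (w : ℕ) : ℕ :=
  {x : Fin n → F | x ∈ C ∧ hammingNorm x = w}.ncard

/-- `A_w^Σ(V^{(W)})`: the overall number of Hamming-weight-`w` vectors of `F_q^n` lying in
cosets of `C` of weight exactly `W`. -/
noncomputable def numVectorsCosetExact {F : Type*} [Field F] [Fintype F] [DecidableEq F] {n : ℕ}
    (C : Submodule F (Fin n → F)) (w W : ℕ) : ℕ :=
  {x : Fin n → F | hammingNorm x = w ∧ cosetWeight C x = W}.ncard

/-- `A_w^Σ(V^{≤W})`: the overall number of Hamming-weight-`w` vectors of `F_q^n` lying in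
cosets of `C` of weight at most `W`. -/
noncomputable def numVectorsCosetLe {F : Type*} [Field F] [Fintype F] [DecidableEq F] {n : ℕ}
    (C : Submodule F (Fin n → F)) (w W : ℕ) : ℕ :=
  {x : Fin n → F | hammingNorm x = w ∧ cosetWeight C x ≤ W}.ncard

/-- The code `C` has minimum distance `d`: every nonzero codeword has Hamming weight at
least `d`, and some nonzero codeword has Hamming weight exactly `d`. -/
def HasMinDist {F : Type*} [Field F] [Fintype F] [DecidableEq F] {n : ℕ}
    (C : Submodule F (Fin n → F)) (d : ℕ) : Prop :=
  (∀ c ∈ C, c ≠ 0 → d ≤ hammingNorm c) ∧ ∃ c ∈ C, c ≠ 0 ∧ hammingNorm c = d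

/-- The code `C` has covering radius `R`: every vector of `F_q^n` is at Hamming distance at
most `R` from `C` and some vector is at Hamming distance exactly `R` from `C`. -/
def HasCoveringRadius {F : Type*} [Field F] [Fintype F] [DecidableEq F] {n : ℕ}
    (C : Submodule F (Fin n → F)) (R : ℕ) : Prop :=
  (∀ x : Fin n → F, cosetWeight C x ≤ R) ∧ ∃ x : Fin n → F, cosetWeight C x = R

/-- `V_m(t) = ∑_{i=0}^t (q-1)^i C(m,i)`, the volume of a Hamming sphere of radius `t`
in `F_q^m`, as a rational number. -/
def sphereVol (q m t : ℕ) : ℚ :=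
  ∑ i ∈ Finset.range (t + 1), ((q : ℚ) - 1) ^ i * (m.choose i : ℚ)

/-!
As `3 ≤ d`, any two of the subspaces `C + F eᵢ` meet exactly in `C`, so the words at distance at
most `1` from `C` form a sunflower with kernel `C`. The MDS property and the modular law give the
dimension of each petal cut down to the words supported on a set of coordinates, and hence the
number of such words; it depends only on the size `t` of the set, and inclusion-exclusion over the
support turns it into a count by weight. For `t + 1 < d` the number is `1 + t (q - 1)`. Alternating
binomial sums of order `w ≥ 2` kill this affine function of `t`, so subtracting it throughout
removes all terms with `t + 1 < d`; the term `t + 1 = d` is the isolated summand of the formula.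
-/

section FiniteSums

theorem sum_neg_one_pow_mul_choose_mul_eval_eq_zero {R : Type*} [CommRing R] {P : Polynomial R}
    {n : ℕ} (hP : P.natDegree < n) :
    ∑ j ∈ range (n + 1), (-1) ^ j * (n.choose j : R) * P.eval ((n - j : ℕ) : R) = 0 := by
  have hdiff := congrFun (Polynomial.fwdDiff_iter_eq_zero_of_degree_lt hP) 0
  rw [fwdDiff_iter_eq_sum_shift, ← sum_flip] at hdiff
  refine (sum_congr rfl fun j hj ↦ ?_).trans hdiff
  have hjn : j ≤ n := mem_range_succ_iff.mp hj
  simp [Nat.choose_symm hjn, Nat.sub_sub_self hjn]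

theorem sum_neg_one_pow_mul_choose_mul_one_add_mul_eq_zero {R : Type*} [CommRing R] {n : ℕ}
    (hn : 2 ≤ n) (a : R) :
    ∑ j ∈ range (n + 1), (-1) ^ j * (n.choose j : R) * (1 + (n - j : ℕ) * a) = 0 := by
  have hdeg : (1 + .X * .C a : Polynomial R).natDegree < n :=
    lt_of_le_of_lt (by compute_degree) hn
  simpa [mul_comm a] using sum_neg_one_pow_mul_choose_mul_eval_eq_zero hdeg

theorem ite_eq_eq_sum_powerset_ite_subset_sdiff {ι : Type*} [DecidableEq ι] (A S : Finset ι) :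
    (if A = S then 1 else 0 : ℤ) =
      ∑ T ∈ S.powerset, (-1 : ℤ) ^ #T * (if A ⊆ S \ T then 1 else 0) := by
  simp_rw [mul_ite, mul_one, mul_zero, ← sum_filter]
  by_cases hAS : A ⊆ S
  · have hfilter : {T ∈ S.powerset | A ⊆ S \ T} = (S \ A).powerset := by
      ext T
      simp only [mem_filter, mem_powerset, subset_sdiff, hAS, true_and, disjoint_comm]
    rw [hfilter, sum_powerset_neg_one_pow_card]
    have heq : A = S ↔ S \ A = ∅ := by
      rw [sdiff_eq_empty_iff_subset, subset_antisymm_iff, and_iff_right hAS]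
    simp only [heq]
  · rw [if_neg fun h ↦ hAS h.subset, filter_eq_empty_iff.2 fun T _ h ↦ hAS (h.trans sdiff_subset),
      sum_empty]

variable {α ι : Type*}

theorem card_filter_eq_eq_sum_powerset [DecidableEq ι] (X : Finset α) (s : α → Finset ι)
    (S : Finset ι) :
    (#{x ∈ X | s x = S} : ℤ) = ∑ T ∈ S.powerset, (-1 : ℤ) ^ #T * #{x ∈ X | s x ⊆ S \ T} := by
  simp_rw [← sum_boole, ite_eq_eq_sum_powerset_ite_subset_sdiff, mul_sum]
  exact sum_comm

theorem card_filter_card_eq_of_card_filter_subset [Fintype ι] [DecidableEq ι] {X : Finset α}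
    {s : α → Finset ι} {f : ℕ → ℤ} (hf : ∀ T, (#{x ∈ X | s x ⊆ T} : ℤ) = f #T) (w : ℕ) :
    (#{x ∈ X | #(s x) = w} : ℤ) = (Fintype.card ι).choose w *
      ∑ j ∈ range (w + 1), (-1 : ℤ) ^ j * (w.choose j : ℤ) * f (w - j) := by
  have hfiber (S : Finset ι) (hS : S ∈ powersetCard w univ) :
      (#{x ∈ X | s x = S} : ℤ) =
        ∑ j ∈ range (w + 1), (-1 : ℤ) ^ j * (w.choose j : ℤ) * f (w - j) := by
    rw [mem_powersetCard_univ] at hS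
    calc (#{x ∈ X | s x = S} : ℤ)
        = ∑ T ∈ S.powerset, (-1 : ℤ) ^ #T * f (w - #T) := by
          rw [card_filter_eq_eq_sum_powerset]
          refine sum_congr rfl fun T hT ↦ ?_
          rw [hf, card_sdiff_of_subset (mem_powerset.mp hT), hS]
      _ = ∑ j ∈ range (w + 1), (-1 : ℤ) ^ j * (w.choose j : ℤ) * f (w - j) := by
          rw [sum_powerset_apply_card fun j ↦ (-1 : ℤ) ^ j * f (w - j), hS]
          simp only [nsmul_eq_mul, mul_left_comm, mul_assoc]
  calc (#{x ∈ X | #(s x) = w} : ℤ)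
      = ∑ S ∈ powersetCard w univ, (#{x ∈ X | s x = S} : ℤ) := by
        rw [← Nat.cast_sum, card_eq_sum_card_fiberwise (f := s) (t := powersetCard w univ)]
        · congr! 2 with S hS
          rw [filter_filter]
          refine congrArg card (filter_congr fun x _ ↦ and_iff_right_of_imp ?_)
          rintro rfl
          exact mem_powersetCard_univ.mp hS
        · intro x hx
          simpa using (mem_filter.mp hx).2
    _ = _ := by
        rw [sum_congr rfl hfiber, sum_const, card_powersetCard, card_univ, nsmul_eq_mul]

theorem ncard_union_iUnion_of_inter_subset [Finite α] [Fintype ι] {A : ι → Set α} {B : Set α}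
    (hB : ∀ i, B ⊆ A i) (hA : Pairwise fun i j ↦ A i ∩ A j ⊆ B) :
    ((B ∪ ⋃ i, A i).ncard : ℤ) = B.ncard + ∑ i, ((A i).ncard - B.ncard : ℤ) := by
  have hpetals : Pairwise (Function.onFun Disjoint fun i ↦ A i \ B) := fun i j hij ↦
    Set.disjoint_left.mpr fun x hi hj ↦ hi.2 (hA hij ⟨hi.1, hj.1⟩)
  have hdisj : Disjoint B (⋃ i, A i \ B) :=
    Set.disjoint_iUnion_right.mpr fun i ↦ Set.disjoint_sdiff_right
  have hunion : B ∪ ⋃ i, A i = B ∪ ⋃ i, A i \ B := by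
    rw [← Set.iUnion_sdiff, Set.union_sdiff_self]
  rw [hunion, Set.ncard_union_eq hdisj,
    Set.ncard_iUnion_of_finite (fun i ↦ Set.toFinite _) hpetals, finsum_eq_sum_of_fintype]
  push_cast
  congr! 2 with i
  rw [Set.ncard_sdiff (hB i), Nat.cast_sub (Set.ncard_le_ncard (hB i))]

end FiniteSums

section CoordinateSubspaces

open Module Pi

variable {ι F : Type*} [Finite ι] [Field F]

theorem spanSubset_mono {S T : Set ι} (h : S ⊆ T) : spanSubset F S ≤ spanSubset F T :=
  Submodule.span_mono (Set.image_mono h)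

theorem spanSubset_union (S T : Set ι) :
    spanSubset F (S ∪ T) = spanSubset F S ⊔ spanSubset F T := by
  simp_rw [spanSubset, Set.image_union, Submodule.span_union]

theorem disjoint_spanSubset {S T : Set ι} (h : Disjoint S T) :
    Disjoint (spanSubset F S) (spanSubset F T) := by
  rw [Submodule.disjoint_def]
  intro x hS hT
  rw [mem_spanSubset_iff] at hS hT
  ext i
  by_cases hi : i ∈ S
  · exact hT i (Set.disjoint_left.mp h hi)
  · exact hS i hi

theorem finrank_sup_of_disjoint {V : Type*} [AddCommGroup V] [Module F V] [FiniteDimensional F V]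
    {U W : Submodule F V} (h : Disjoint U W) :
    finrank F ↥(U ⊔ W) = finrank F U + finrank F W := by
  rw [← Submodule.finrank_sup_add_finrank_inf_eq, h.eq_bot, finrank_bot, add_zero]

theorem ncard_coe_submodule {V : Type*} [AddCommGroup V] [Module F V] [FiniteDimensional F V]
    (U : Submodule F V) : (U : Set V).ncard = Nat.card F ^ finrank F U := by
  rw [← Nat.card_coe_set_eq]
  exact natCard_eq_pow_finrank (K := F) (V := U)

variable {C : Submodule F (ι → F)} {S T : Set ι}

theorem finrank_sup_spanSubset_inf_spanSubset_of_subset (hCS : Disjoint C (spanSubset F S))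
    (hST : S ⊆ T) :
    finrank F ↥((C ⊔ spanSubset F S) ⊓ spanSubset F T) =
      finrank F ↥(C ⊓ spanSubset F T) + S.ncard := by
  rw [sup_comm, sup_inf_assoc_of_le _ (spanSubset_mono hST), sup_comm,
    finrank_sup_of_disjoint (hCS.mono_left inf_le_left), dim_spanSubset]

theorem finrank_sup_spanSubset_inf_spanSubset_of_disjoint (hCS : Disjoint C (spanSubset F S))
    (hST : Disjoint S T) :
    finrank F ↥((C ⊔ spanSubset F S) ⊓ spanSubset F T) =
      finrank F ↥(C ⊓ spanSubset F (T ∪ S)) := by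
  refine Nat.add_right_cancel (m := S.ncard) ?_
  rw [← finrank_sup_spanSubset_inf_spanSubset_of_subset hCS Set.subset_union_right,
    spanSubset_union, ← inf_sup_assoc_of_le _ le_sup_right,
    finrank_sup_of_disjoint ((disjoint_spanSubset hST).symm.mono_left inf_le_right),
    dim_spanSubset]

theorem sup_inf_sup_eq_of_disjoint {α : Type*} [Lattice α] [OrderBot α] [IsModularLattice α]
    {a b c : α} (hab : Disjoint a b) (hc : Disjoint c (a ⊔ b)) : (c ⊔ a) ⊓ (c ⊔ b) = c := by
  have hacb : Disjoint a (b ⊔ c) := hab.disjoint_sup_right_of_disjoint_sup_left hc.symm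
  rw [sup_inf_assoc_of_le a le_sup_left, sup_comm c b, hacb.eq_bot, sup_bot_eq]

end CoordinateSubspaces

section MinDist

open Module Pi

variable {ι F : Type*} [Fintype ι] [Field F] [DecidableEq F] {C : Submodule F (ι → F)} {d : ℕ}

theorem hammingNorm_le_iff_exists_mem_spanSubset {x : ι → F} {r : ℕ} :
    hammingNorm x ≤ r ↔ ∃ S : Set ι, S.ncard ≤ r ∧ x ∈ spanSubset F S := by
  constructor
  · intro h
    refine ⟨({i | x i ≠ 0} : Finset ι), by rwa [Set.ncard_coe_finset], ?_⟩
    simp [mem_spanSubset_iff]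
  · rintro ⟨S, hS, hx⟩
    refine le_trans ?_ hS
    rw [hammingNorm, ← Set.ncard_coe_finset]
    refine Set.ncard_le_ncard fun i hi ↦ ?_
    by_contra hiS
    exact (mem_filter.mp hi).2 (mem_spanSubset_iff.mp hx i hiS)

theorem disjoint_spanSubset_of_ncard_lt (hC : ∀ c ∈ C, c ≠ 0 → d ≤ hammingNorm c) {S : Set ι}
    (hS : S.ncard < d) : Disjoint C (spanSubset F S) := by
  rw [Submodule.disjoint_def]
  intro x hxC hxS
  by_contra hx
  have hle := hammingNorm_le_iff_exists_mem_spanSubset.mpr ⟨S, le_rfl, hxS⟩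
  exact ((hC x hxC hx).trans hle).not_gt hS

theorem finrank_inf_spanSubset_of_mds (hC : ∀ c ∈ C, c ≠ 0 → d ≤ hammingNorm c)
    (hMDS : d + finrank F C = Fintype.card ι + 1) (T : Set ι) :
    finrank F ↥(C ⊓ spanSubset F T) = T.ncard + 1 - d := by
  obtain hT | hT := lt_or_ge T.ncard d
  · rw [(disjoint_spanSubset_of_ncard_lt hC hT).eq_bot, finrank_bot]
    lia
  have hdim := Submodule.finrank_le C
  rw [finrank_fintype_fun_eq_card] at hdim
  obtain ⟨S, hST, hS⟩ := Set.exists_subset_card_eq (s := T) (show d - 1 ≤ T.ncard by lia)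
  have lower : finrank F C + T.ncard ≤ finrank F ↥(C ⊓ spanSubset F T) + Fintype.card ι := by
    have hsup := Submodule.finrank_le (C ⊔ spanSubset F T)
    have hmod := Submodule.finrank_sup_add_finrank_inf_eq C (spanSubset F T)
    rw [finrank_fintype_fun_eq_card] at hsup
    rw [dim_spanSubset] at hmod
    lia
  have upper : finrank F ↥(C ⊓ spanSubset F T) + (d - 1) ≤ T.ncard := by
    have hdisj : Disjoint C (spanSubset F S) := disjoint_spanSubset_of_ncard_lt hC (by lia)
    rw [← hS, ← finrank_sup_spanSubset_inf_spanSubset_of_subset hdisj hST,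
      ← dim_spanSubset (R := F)]
    exact Submodule.finrank_mono inf_le_right
  lia

theorem sup_spanSubset_inf_sup_spanSubset (hC : ∀ c ∈ C, c ≠ 0 → d ≤ hammingNorm c) (hd : 3 ≤ d)
    {i j : ι} (hij : i ≠ j) : (C ⊔ spanSubset F {i}) ⊓ (C ⊔ spanSubset F {j}) = C := by
  refine sup_inf_sup_eq_of_disjoint (disjoint_spanSubset (Set.disjoint_singleton.mpr hij)) ?_
  rw [← spanSubset_union]
  refine disjoint_spanSubset_of_ncard_lt hC ?_
  rw [Set.singleton_union, Set.ncard_pair hij]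
  lia

theorem finrank_sup_spanSubset_singleton_inf_spanSubset [DecidableEq ι]
    (hC : ∀ c ∈ C, c ≠ 0 → d ≤ hammingNorm c) (hMDS : d + finrank F C = Fintype.card ι + 1)
    (hd : 2 ≤ d) (T : Finset ι) (i : ι) :
    finrank F ↥((C ⊔ spanSubset F {i}) ⊓ spanSubset F (T : Set ι)) =
      if i ∈ T then #T + 1 - d + 1 else #T + 2 - d := by
  have hCi : Disjoint C (spanSubset F {i}) :=
    disjoint_spanSubset_of_ncard_lt hC (by rw [Set.ncard_singleton]; lia)
  split_ifs with hi
  · rw [finrank_sup_spanSubset_inf_spanSubset_of_subset hCi (by simpa),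
      finrank_inf_spanSubset_of_mds hC hMDS, Set.ncard_singleton, Set.ncard_coe_finset]
  · rw [finrank_sup_spanSubset_inf_spanSubset_of_disjoint hCi (by simpa),
      finrank_inf_spanSubset_of_mds hC hMDS, Set.union_singleton,
      Set.ncard_insert_of_notMem (by simpa), Set.ncard_coe_finset]

end MinDist

section BallCount

/-- The number of words at Hamming distance at most `1` from an `[n, k, d]_q` MDS code with
`3 ≤ d` that are supported on a given set of `t` coordinates. The truncated exponent `t + 1 - d`
is intended: for `t < d` the only codeword supported on the set is `0`. -/
def mdsBallCount {R : Type*} [CommRing R] (q n : R) (d t : ℕ) : R :=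
  q ^ (t + 1 - d) * (1 + t * (q - 1)) + (n - t) * (q ^ (t + 2 - d) - q ^ (t + 1 - d))

variable {R : Type*} [CommRing R] (q n : R) {d t w : ℕ}

theorem mdsBallCount_of_add_one_lt (h : t + 1 < d) :
    mdsBallCount q n d t = 1 + t * (q - 1) := by
  rw [mdsBallCount, Nat.sub_eq_zero_of_le h.le, Nat.sub_eq_zero_of_le (Nat.succ_le_of_lt h)]
  ring

theorem mdsBallCount_of_add_one_eq (h : t + 1 = d) :
    mdsBallCount q n d t = 1 + t * (q - 1) + (n - d + 1) * (q - 1) := by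
  subst h
  rw [mdsBallCount, Nat.sub_self, show t + 2 - (t + 1) = 1 by lia]
  push_cast
  ring

theorem mdsBallCount_of_le (h : d ≤ t) :
    mdsBallCount q n d t = q ^ (t + 1 - d) * (1 + n * (q - 1)) := by
  rw [mdsBallCount, show t + 2 - d = t + 1 - d + 1 by lia]
  ring

theorem sum_neg_one_pow_mul_choose_mul_mdsBallCount (hw : 2 ≤ w) (hd : 1 ≤ d) (hdw : d ≤ w + 1) :
    ∑ j ∈ range (w + 1), (-1) ^ j * (w.choose j : R) * mdsBallCount q n d (w - j) =
      (∑ j ∈ range (w + 1 - d), (-1) ^ j * (w.choose j : R) *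
          (q ^ (w - d + 1 - j) * (1 + n * (q - 1)) - 1 - (w - j) * (q - 1))) -
        (-1) ^ (w + d) * (w.choose (d - 1) : R) * (n - d + 1) * (q - 1) := by
  let ball (t : ℕ) : R := 1 + t * (q - 1)
  have hball : ∑ j ∈ range (w + 1), (-1) ^ j * (w.choose j : R) * ball (w - j) = 0 :=
    sum_neg_one_pow_mul_choose_mul_one_add_mul_eq_zero hw (q - 1)
  have hlow : ∀ j ∈ range (w + 1), j ∉ range (w + 1 - d + 1) →
      (-1) ^ j * (w.choose j : R) * (mdsBallCount q n d (w - j) - ball (w - j)) = 0 := by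
    intro j hj hj'
    rw [mem_range] at hj hj'
    rw [mdsBallCount_of_add_one_lt q n (by lia), sub_self, mul_zero]
  have hhigh : ∀ j ∈ range (w + 1 - d),
      mdsBallCount q n d (w - j) - ball (w - j) =
        q ^ (w - d + 1 - j) * (1 + n * (q - 1)) - 1 - (w - j) * (q - 1) := by
    intro j hj
    rw [mem_range] at hj
    rw [mdsBallCount_of_le q n (by lia), show w - j + 1 - d = w - d + 1 - j by lia]
    simp only [ball, Nat.cast_sub (show j ≤ w by lia)]
    ring
  have hmid : (-1) ^ (w + 1 - d) * (w.choose (w + 1 - d) : R) *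
        (mdsBallCount q n d (w - (w + 1 - d)) - ball (w - (w + 1 - d))) =
      -((-1) ^ (w + d) * (w.choose (d - 1) : R) * (n - d + 1) * (q - 1)) := by
    have hsign : (-1 : R) ^ (w + d) = -(-1) ^ (w + 1 - d) := by
      simp [show w + d = w + 1 - d + 1 + 2 * (d - 1) by lia, pow_add, pow_mul]
    rw [mdsBallCount_of_add_one_eq q n (by lia), hsign,
      Nat.choose_symm_of_eq_add (show w = w + 1 - d + (d - 1) by lia)]
    simp only [ball]
    ring
  calc ∑ j ∈ range (w + 1), (-1) ^ j * (w.choose j : R) * mdsBallCount q n d (w - j)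
      = ∑ j ∈ range (w + 1), (-1) ^ j * (w.choose j : R) *
          (mdsBallCount q n d (w - j) - ball (w - j)) := by
        simp_rw [mul_sub _ (mdsBallCount q n d _), sum_sub_distrib, hball, sub_zero]
    _ = ∑ j ∈ range (w + 1 - d + 1), (-1) ^ j * (w.choose j : R) *
          (mdsBallCount q n d (w - j) - ball (w - j)) :=
        (sum_subset (range_subset_range.mpr (by lia)) hlow).symm
    _ = _ := by
        rw [sum_range_succ, hmid, ← sub_eq_add_neg]
        exact congrArg (· - _) (sum_congr rfl fun j hj ↦ by rw [hhigh j hj])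

end BallCount

section Cosets

open Module Pi

variable {F : Type*} [Field F] [Fintype F] [DecidableEq F] {n d : ℕ}
  {C : Submodule F (Fin n → F)} {x : Fin n → F}

theorem cosetWeight_le_iff {r : ℕ} :
    cosetWeight C x ≤ r ↔ ∃ S : Set (Fin n), S.ncard ≤ r ∧ x ∈ C ⊔ spanSubset F S := by
  have hcoset : cosetWeight C x ≤ r ↔ ∃ c ∈ C, hammingNorm (x - c) ≤ r := by
    constructor
    · intro h
      obtain ⟨c, hc, hmin⟩ : cosetWeight C x ∈ {m | ∃ c ∈ C, hammingNorm (x - c) = m} :=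
        Nat.sInf_mem ⟨_, 0, C.zero_mem, rfl⟩
      exact ⟨c, hc, hmin.trans_le h⟩
    · rintro ⟨c, hc, h⟩
      have hmem : hammingNorm (x - c) ∈ {m | ∃ c ∈ C, hammingNorm (x - c) = m} := ⟨c, hc, rfl⟩
      exact (Nat.sInf_le hmem).trans h
  simp_rw [hcoset, hammingNorm_le_iff_exists_mem_spanSubset, Submodule.mem_sup]
  constructor
  · rintro ⟨c, hc, S, hS, hx⟩
    exact ⟨S, hS, c, hc, x - c, hx, add_sub_cancel c x⟩
  · rintro ⟨S, hS, c, hc, y, hy, rfl⟩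
    exact ⟨c, hc, S, hS, by rwa [add_sub_cancel_left]⟩

theorem cosetWeight_le_one_iff :
    cosetWeight C x ≤ 1 ↔ x ∈ C ∨ ∃ i, x ∈ C ⊔ spanSubset F {i} := by
  rw [cosetWeight_le_iff]
  constructor
  · rintro ⟨S, hS, hx⟩
    obtain rfl | ⟨i, rfl⟩ := (Set.ncard_le_one_iff_eq).mp hS
    · exact Or.inl (by simpa [spanSubset] using hx)
    · exact Or.inr ⟨i, hx⟩
  · rintro (hx | ⟨i, hx⟩)
    · exact ⟨∅, by simp, Submodule.mem_sup_left hx⟩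
    · exact ⟨{i}, by simp, hx⟩

theorem ncard_cosetWeight_le_one_and_mem_spanSubset
    (hC : ∀ c ∈ C, c ≠ 0 → d ≤ hammingNorm c) (hMDS : d + finrank F C = n + 1) (hd : 3 ≤ d)
    (T : Finset (Fin n)) :
    ({x | cosetWeight C x ≤ 1 ∧ x ∈ spanSubset F (T : Set (Fin n))}.ncard : ℤ) =
      mdsBallCount (Fintype.card F : ℤ) n d #T := by
  let V := spanSubset F (T : Set (Fin n))
  replace hMDS : d + finrank F C = Fintype.card (Fin n) + 1 := by rwa [Fintype.card_fin]
  have hkernel : finrank F ↥(C ⊓ V) = #T + 1 - d := by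
    rw [finrank_inf_spanSubset_of_mds hC hMDS, Set.ncard_coe_finset]
  have hpetal (i : Fin n) : finrank F ↥((C ⊔ spanSubset F {i}) ⊓ V) =
      if i ∈ T then #T + 1 - d + 1 else #T + 2 - d :=
    finrank_sup_spanSubset_singleton_inf_spanSubset hC hMDS (by lia) T i
  have hsunflower : {x | cosetWeight C x ≤ 1 ∧ x ∈ V} =
      ((C ⊓ V : Submodule F (Fin n → F)) : Set (Fin n → F)) ∪
        ⋃ i, ((C ⊔ spanSubset F {i}) ⊓ V : Submodule F (Fin n → F)) := by
    ext x
    simp [cosetWeight_le_one_iff, or_and_right]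
  have hT : #T ≤ n := by simpa using card_le_univ T
  rw [hsunflower, ncard_union_iUnion_of_inter_subset]
  · rw [sum_sub_distrib]
    simp_rw [ncard_coe_submodule, hkernel, hpetal, pow_ite, Nat.cast_ite, sum_ite]
    simp only [Nat.card_eq_fintype_card, Nat.cast_pow, subset_univ, filter_mem_eq_of_subset,
      sum_const, Int.nsmul_eq_mul, filter_not, card_univ_sdiff, Fintype.card_fin, Nat.cast_sub hT,
      card_univ, mdsBallCount]
    ring
  · exact fun i ↦ inf_le_inf_right V le_sup_left
  · intro i j hij x hx
    exact ⟨(sup_spanSubset_inf_sup_spanSubset hC hd hij).le ⟨hx.1.1, hx.2.1⟩, hx.1.2⟩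

end Cosets

/-- **Integral weight spectrum of cosets of weight ≤ 1 of an MDS code** (Lemma 4.1).
For an `[n,k,d]_q` MDS code with `d ≥ 3` and `d-1 ≤ w ≤ n`,
`A_w^Σ(V^{≤1}) = C(n,w) [ ∑_{j=0}^{w-d} (-1)^j C(w,j)
  ( q^{w-d+1-j}(1+n(q-1)) - 1 - (w-j)(q-1) ) - (-1)^{w-d} C(w,d-1)(n-d+1)(q-1) ]`. -/
theorem numVectorsCosetLe_one_eq {F : Type*} [Field F] [Fintype F] [DecidableEq F]
    (q n k d w : ℕ) (hq : Fintype.card F = q)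
    (C : Submodule F (Fin n → F))
    (hk : Module.finrank F C = k) (hmin : HasMinDist C d) (hMDS : d + k = n + 1)
    (hd : 3 ≤ d) (hw1 : d - 1 ≤ w) (hwn : w ≤ n) :
    (numVectorsCosetLe C w 1 : ℤ) =
      (n.choose w : ℤ) *
        ((∑ j ∈ Finset.range (w + 1 - d), (-1 : ℤ) ^ j * (w.choose j : ℤ) *
            ((q : ℤ) ^ (w - d + 1 - j) * (1 + (n : ℤ) * ((q : ℤ) - 1)) - 1
              - ((w : ℤ) - (j : ℤ)) * ((q : ℤ) - 1)))
          - (-1 : ℤ) ^ (w + d) * (w.choose (d - 1) : ℤ) *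
              ((n : ℤ) - (d : ℤ) + 1) * ((q : ℤ) - 1)) := by
  classical
  subst hq hk
  let X : Finset (Fin n → F) := {x | cosetWeight C x ≤ 1}
  let support (x : Fin n → F) : Finset (Fin n) := {i | x i ≠ 0}
  have hX (T : Finset (Fin n)) :
      (#{x ∈ X | support x ⊆ T} : ℤ) = mdsBallCount (Fintype.card F : ℤ) n d #T := by
    rw [← ncard_cosetWeight_le_one_and_mem_spanSubset hmin.1 hMDS hd, ← Set.ncard_coe_finset]
    congr 2
    ext x
    simp [X, support, Pi.mem_spanSubset_iff, subset_iff, not_imp_comm]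
  calc (numVectorsCosetLe C w 1 : ℤ)
      = #{x ∈ X | #(support x) = w} := by
        rw [numVectorsCosetLe, ← Set.ncard_coe_finset]
        congr 2
        ext x
        simp [X, support, hammingNorm, and_comm]
    _ = (n.choose w : ℤ) * ∑ j ∈ range (w + 1),
          (-1 : ℤ) ^ j * (w.choose j : ℤ) * mdsBallCount (Fintype.card F : ℤ) n d (w - j) := by
        rw [card_filter_card_eq_of_card_filter_subset hX, Fintype.card_fin]
    _ = _ := by
        rw [sum_neg_one_pow_mul_choose_mul_mdsBallCount _ _ (by lia) (by lia) (by lia)]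
end

section
/- Let C be a [q+1, k, d]_q MDS code of length n = q+1 with minimum distance d ≥ 3 (so d = q+2-k), and let w be a natural number with d - 1 ≤ w ≤ q+1. Then the overall number A_w^Σ(V^{(1)}) of Hamming-weight-w vectors lying in cosets of C of weight exactly 1 satisfies A_w^Σ(V^{(1)}) = C(q+1, w) · (q-1) · [ q^{w+2-d} - ∑_{i=0}^{w-d} (-1)^i ( C(w, i+1) - C(w, i) ) q^{w+1-d-i} - ε · ( C(w, d-1) - w · C(w-2, d-3) ) ], as an identity of integers. -/
open Finset

/-!
Once `d ≥ 3`, the unit spheres around the codewords are pairwise disjoint and fill up exactly the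
cosets of weight 1.  A codeword of weight `v` has neighbours of weights `v - 1`, `v` and `v + 1`
only, so `A_w^Σ(V^{(1)})` is a combination of `A_{w-1}(C)`, `A_w(C)` and `A_{w+1}(C)`.

In an MDS code, prescribing `m` zeros always costs `min(m, k)` dimensions.  Imposing nonzero
entries one at a time then gives the number of codewords with a given support through a Pascal-type
recursion, and the same recursion collapses the three terms above.
-/

section TruncBinomSum

variable {R : Type*} [CommRing R]

/-- The polynomial part of the Laurent polynomial `q^{M-1} (1 - 1/q)^N` in `q`.  The number of
codewords with a given support of size `N + 1` in an MDS code of minimum distance `d` over `F_q`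
is `q - 1` times this quantity for `M = N + 2 - d`. -/
def truncBinomSum (q : R) (N M : ℕ) : R :=
  ∑ j ∈ range M, (-1) ^ j * (N.choose j : R) * q ^ (M - 1 - j)

lemma mul_truncBinomSum (q : R) (N M : ℕ) :
    q * truncBinomSum q N M = ∑ j ∈ range M, (-1) ^ j * (N.choose j : R) * q ^ (M - j) := by
  rw [truncBinomSum, mul_sum]
  refine sum_congr rfl fun j hj => ?_
  have hexp : M - j = M - 1 - j + 1 := by
    have := mem_range.1 hj
    omega
  rw [hexp, pow_succ]
  ring

lemma truncBinomSum_succ_right (q : R) (N M : ℕ) :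
    truncBinomSum q N (M + 1) = q * truncBinomSum q N M + (-1) ^ M * (N.choose M : R) := by
  rw [mul_truncBinomSum, truncBinomSum, sum_range_succ]
  simp

lemma truncBinomSum_succ_left (q : R) (N M : ℕ) :
    truncBinomSum q (N + 1) M = truncBinomSum q N M - truncBinomSum q N (M - 1) := by
  induction M with
  | zero => simp [truncBinomSum]
  | succ M ih =>
    cases M with
    | zero => simp [truncBinomSum]
    | succ M =>
      have hM := truncBinomSum_succ_right q N M
      rw [Nat.add_sub_cancel] at ih ⊢
      rw [truncBinomSum_succ_right q (N + 1), ih, truncBinomSum_succ_right q N (M + 1),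
        Nat.choose_succ_succ]
      push_cast
      linear_combination hM

lemma sub_one_mul_truncBinomSum_zero_left (q : R) (M : ℕ) :
    (q - 1) * truncBinomSum q 0 M = q ^ M - q ^ (M - 1) := by
  cases M with
  | zero => simp [truncBinomSum]
  | succ M => simp [truncBinomSum, sum_range_succ', pow_succ', sub_mul]

lemma pow_succ_sub_sum_choose_sub_choose (q : R) (N M : ℕ) :
    q ^ (M + 1) - ∑ i ∈ range M,
        (-1) ^ i * ((N.choose (i + 1) : R) - (N.choose i : R)) * q ^ (M - i) =
      q * truncBinomSum q N (M + 1) + q * truncBinomSum q N M := by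
  simp only [mul_truncBinomSum, sum_range_succ', mul_sub, sub_mul, sum_sub_distrib,
    Nat.add_sub_add_right, pow_succ, mul_neg_one, neg_mul, sum_neg_distrib]
  simp only [pow_zero, Nat.choose_zero_right, Nat.cast_one, Nat.sub_zero]
  ring

lemma truncBinomSum_three_term (q n : R) (u M : ℕ) :
    (u + 2) * (q - 1) * truncBinomSum q u (M - 1) + (u + 2) * (q - 2) * truncBinomSum q (u + 1) M
        + (n - (u + 2)) * truncBinomSum q (u + 2) (M + 1) =
      q * truncBinomSum q (u + 2) (M + 1) + q * truncBinomSum q (u + 2) M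
        + (-1) ^ M * (((u + 2).choose M : R) - (u + 2) * (u.choose M : R))
        + (n - (q + 1)) * truncBinomSum q (u + 2) (M + 1) := by
  have left_u := truncBinomSum_succ_left q u M
  have left_u' := truncBinomSum_succ_left q u (M + 1)
  have left_succ := truncBinomSum_succ_left q (u + 1) (M + 1)
  have right_u := truncBinomSum_succ_right q u M
  have right_add_two := truncBinomSum_succ_right q (u + 2) M
  rw [Nat.add_sub_cancel] at left_u' left_succ
  linear_combination right_add_two - (u + 2 : R) * left_succ - (u + 2 : R) * left_u'
    + (u + 2 : R) * (q - 1) * left_u - (u + 2 : R) * right_u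

lemma cast_choose_succ_mul_succ (n k : ℕ) :
    (n.choose (k + 1) : R) * (k + 1) = n.choose k * (n - k) := by
  have hnat := congrArg (Nat.cast (R := R)) (n.choose_succ_right_eq k)
  rcases le_or_gt k n with hle | hlt
  · simpa [Nat.cast_sub hle] using hnat
  · simpa [Nat.choose_eq_zero_of_lt hlt] using hnat

end TruncBinomSum

section Hamming

variable {ι β : Type*} [Fintype ι] [DecidableEq ι] [DecidableEq β]

lemma hammingDist_eq_one_iff {x y : ι → β} :
    hammingDist x y = 1 ↔ ∃ i, ∃ a, a ≠ x i ∧ Function.update x i a = y := by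
  rw [hammingDist, card_eq_one]
  constructor
  · rintro ⟨i, hi⟩
    have hne (j : ι) : x j ≠ y j ↔ j = i := by simpa using Finset.ext_iff.1 hi j
    refine ⟨i, y i, ((hne i).2 rfl).symm, Function.update_eq_iff.2 ⟨rfl, fun j hj => ?_⟩⟩
    exact not_not.1 (mt (hne j).1 hj)
  · rintro ⟨i, a, ha, rfl⟩
    refine ⟨i, Finset.ext fun j => ?_⟩
    by_cases hj : j = i
    · subst hj
      simp [ha.symm]
    · simp [hj]

omit [Fintype ι] [DecidableEq β] in
lemma eq_and_eq_of_update_eq_update {x : ι → β} {i j : ι} {a b : β} (ha : a ≠ x i)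
    (h : Function.update x i a = Function.update x j b) : i = j ∧ a = b := by
  have hi := congrFun h i
  rw [Function.update_self] at hi
  obtain rfl : i = j := by
    by_contra hij
    exact ha (by rwa [Function.update_of_ne hij] at hi)
  exact ⟨rfl, Function.update_injective x i h⟩

lemma card_filter_hammingDist_eq_one [Fintype β] (x : ι → β) (p : (ι → β) → Prop)
    [DecidablePred p] :
    #{y | hammingDist x y = 1 ∧ p y} = ∑ i, #{a | a ≠ x i ∧ p (Function.update x i a)} := by
  rw [← card_sigma]
  symm
  refine card_bij (fun s _ => Function.update x s.1 s.2) ?_ ?_ ?_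
  · intro s hs
    simp only [mem_sigma, mem_filter, mem_univ, true_and] at hs ⊢
    exact ⟨hammingDist_eq_one_iff.2 ⟨s.1, s.2, hs.1, rfl⟩, hs.2⟩
  · rintro ⟨i, a⟩ hi ⟨j, b⟩ - hij
    simp only [mem_sigma, mem_filter, mem_univ, true_and] at hi
    obtain ⟨rfl, rfl⟩ := eq_and_eq_of_update_eq_update hi.1 hij
    rfl
  · intro y hy
    simp only [mem_filter, mem_univ, true_and] at hy
    obtain ⟨i, a, ha, rfl⟩ := hammingDist_eq_one_iff.1 hy.1
    exact ⟨⟨i, a⟩, by simpa using ⟨ha, hy.2⟩, rfl⟩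

variable [Zero β]

lemma hammingNorm_update (x : ι → β) (i : ι) (a : β) :
    hammingNorm (Function.update x i a) + (if x i = 0 then 0 else 1) =
      hammingNorm x + (if a = 0 then 0 else 1) := by
  have hoff : ∑ j ∈ univ.erase i, (if Function.update x i a j ≠ 0 then 1 else 0) =
      ∑ j ∈ univ.erase i, (if x j ≠ 0 then 1 else 0) :=
    sum_congr rfl fun j hj => by rw [Function.update_of_ne (ne_of_mem_erase hj)]
  simp only [hammingNorm, card_filter]
  rw [← add_sum_erase _ _ (mem_univ i), hoff, ← add_sum_erase _ (fun j => ite (x j ≠ 0) 1 0)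
    (mem_univ i), Function.update_self]
  simp only [ne_eq, ite_not]
  ring

omit [DecidableEq ι] in
lemma card_filter_eq_zero_add_hammingNorm (x : ι → β) :
    #{i | x i = 0} + hammingNorm x = Fintype.card ι :=
  card_filter_add_card_filter_not _

variable [Fintype β]

lemma card_filter_hammingNorm_update_of_eq_zero {x : ι → β} {i : ι} (hi : x i = 0) (w : ℕ) :
    #{a | a ≠ x i ∧ hammingNorm (Function.update x i a) = w + 1} =
      if hammingNorm x = w then Fintype.card β - 1 else 0 := by
  have hnorm {a : β} (ha : a ≠ 0) :
      hammingNorm (Function.update x i a) = hammingNorm x + 1 := by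
    simpa [hi, ha] using hammingNorm_update x i a
  split_ifs with h
  · rw [← card_univ, ← card_erase_of_mem (mem_univ (0 : β))]
    congr 1
    ext a
    simp +contextual [hi, hnorm, h]
  · simp +contextual [hi, hnorm, h]

lemma card_filter_hammingNorm_update_of_ne_zero {x : ι → β} {i : ι} (hi : x i ≠ 0) (w : ℕ) :
    #{a | a ≠ x i ∧ hammingNorm (Function.update x i a) = w + 1} =
      (if hammingNorm x = w + 1 then Fintype.card β - 2 else 0) +
        if hammingNorm x = w + 2 then 1 else 0 := by
  have hnorm {a : β} (ha : a ≠ 0) : hammingNorm (Function.update x i a) = hammingNorm x := by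
    simpa [hi, ha] using hammingNorm_update x i a
  have hnorm_zero : hammingNorm (Function.update x i 0) + 1 = hammingNorm x := by
    simpa [hi] using hammingNorm_update x i 0
  have hsplit : #{a | a ≠ x i ∧ hammingNorm (Function.update x i a) = w + 1} =
      #{a | (a ≠ x i ∧ a ≠ 0) ∧ hammingNorm x = w + 1} +
        #{a : β | a = 0 ∧ hammingNorm x = w + 2} := by
    rw [← card_filter_add_card_filter_not (fun a : β => a ≠ 0), filter_filter, filter_filter]
    congr 2
    · ext a
      by_cases ha : a = 0 <;> simp [ha, hnorm]
    · ext a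
      by_cases ha : a = 0
      · subst ha
        simp [Ne.symm hi, ← hnorm_zero]
      · simp [ha]
  have hcard : #{a | a ≠ x i ∧ a ≠ 0} = Fintype.card β - 2 := by
    have hcompl : ({a | a ≠ x i ∧ a ≠ 0} : Finset β) = {x i, 0}ᶜ := by
      ext a
      simp
    rw [hcompl, card_compl, card_pair hi]
  rw [hsplit]
  congr 1
  · split_ifs with h <;> simp [h, hcard]
  · split_ifs with h <;> simp [h, filter_eq']

/-- Every neighbour of `x` is obtained by changing one coordinate: from zero to nonzero, between
nonzero values, or from nonzero to zero. -/
lemma card_filter_hammingDist_eq_one_hammingNorm (x : ι → β) (w : ℕ) :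
    #{y | hammingDist x y = 1 ∧ hammingNorm y = w + 1} =
      (if hammingNorm x = w then (Fintype.card ι - w) * (Fintype.card β - 1) else 0) +
      (if hammingNorm x = w + 1 then (w + 1) * (Fintype.card β - 2) else 0) +
      (if hammingNorm x = w + 2 then w + 2 else 0) := by
  have hzeros : #{i | x i = 0} = Fintype.card ι - hammingNorm x := by
    have := card_filter_eq_zero_add_hammingNorm x
    omega
  have hnonzeros : #{i | ¬ x i = 0} = hammingNorm x := rfl
  rw [card_filter_hammingDist_eq_one, ← sum_filter_add_sum_filter_not univ (fun i => x i = 0),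
    sum_congr rfl fun i hi => card_filter_hammingNorm_update_of_eq_zero (mem_filter.1 hi).2 w,
    sum_congr rfl fun i hi => card_filter_hammingNorm_update_of_ne_zero (mem_filter.1 hi).2 w,
    sum_const, sum_const, hzeros, hnonzeros]
  simp only [smul_eq_mul]
  split_ifs <;> grind

end Hamming

section CosetWeight

variable {F : Type*} [Field F] [Fintype F] [DecidableEq F] {n : ℕ} (C : Submodule F (Fin n → F))

lemma exists_hammingDist_eq_cosetWeight (x : Fin n → F) :
    ∃ c ∈ C, hammingDist c x = cosetWeight C x := by
  obtain ⟨c, hc, h⟩ := Nat.sInf_mem (s := {m : ℕ | ∃ c ∈ C, hammingNorm (x - c) = m})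
    ⟨_, 0, C.zero_mem, rfl⟩
  exact ⟨c, hc, by rwa [hammingDist_eq_hammingNorm, neg_add_eq_sub]⟩

variable {C}

lemma cosetWeight_le_hammingDist {c : Fin n → F} (hc : c ∈ C) (x : Fin n → F) :
    cosetWeight C x ≤ hammingDist c x :=
  Nat.sInf_le ⟨c, hc, by rw [hammingDist_eq_hammingNorm, neg_add_eq_sub]⟩

variable {W : ℕ}

omit [Fintype F] in
lemma eq_of_hammingDist_add_hammingDist_le (hC : ∀ c ∈ C, c ≠ 0 → 2 * W < hammingNorm c)
    {c c' : Fin n → F} (hc : c ∈ C) (hc' : c' ∈ C) (x : Fin n → F)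
    (h : hammingDist c x + hammingDist c' x ≤ 2 * W) : c = c' := by
  by_contra hne
  have hdist := hC (-c + c') (C.add_mem (C.neg_mem hc) hc')
    fun h0 => hne (neg_add_eq_zero.1 h0)
  rw [← hammingDist_eq_hammingNorm] at hdist
  have htri := hammingDist_triangle_right c c' x
  omega

lemma cosetWeight_eq_iff (hC : ∀ c ∈ C, c ≠ 0 → 2 * W < hammingNorm c) (x : Fin n → F) :
    cosetWeight C x = W ↔ ∃ c ∈ C, hammingDist c x = W := by
  obtain ⟨c', hc', hmin⟩ := exists_hammingDist_eq_cosetWeight C x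
  constructor
  · exact fun h => ⟨c', hc', hmin.trans h⟩
  · rintro ⟨c, hc, rfl⟩
    have hle := cosetWeight_le_hammingDist hc x
    rw [← hmin, eq_of_hammingDist_add_hammingDist_le hC hc' hc x (by omega)]

/-- The spheres of radius `W` around the codewords are pairwise disjoint. -/
lemma numVectorsCosetExact_eq_sum [DecidablePred (· ∈ C)]
    (hC : ∀ c ∈ C, c ≠ 0 → 2 * W < hammingNorm c) (w : ℕ) :
    numVectorsCosetExact C w W =
      ∑ c with c ∈ C, #{x | hammingDist c x = W ∧ hammingNorm x = w} := by
  have hunion : {x : Fin n → F | hammingNorm x = w ∧ cosetWeight C x = W} =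
      ((univ.filter (· ∈ C)).biUnion fun c =>
        {x | hammingDist c x = W ∧ hammingNorm x = w} : Finset (Fin n → F)) := by
    ext x
    simp only [cosetWeight_eq_iff hC, coe_biUnion, coe_filter, mem_univ, true_and,
      Set.mem_iUnion, Set.mem_ofPred_eq, exists_prop]
    tauto
  rw [numVectorsCosetExact, hunion, Set.ncard_coe_finset, card_biUnion]
  intro c hc c' hc' hne
  refine disjoint_left.2 fun x hx hx' => hne ?_
  simp only [coe_filter, mem_filter, mem_univ, true_and, Set.mem_ofPred_eq] at hc hc' hx hx'
  exact eq_of_hammingDist_add_hammingDist_le hC hc hc' x (by omega)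

variable (C) in
lemma numCodewordsOfWeight_eq_card [DecidablePred (· ∈ C)] (w : ℕ) :
    numCodewordsOfWeight C w = #{c | c ∈ C ∧ hammingNorm c = w} := by
  rw [numCodewordsOfWeight, ← Set.ncard_coe_finset, coe_filter_univ]

lemma sum_ite_hammingNorm_eq [DecidablePred (· ∈ C)] (w a : ℕ) :
    ∑ c with c ∈ C, (if hammingNorm c = w then a else 0) = a * numCodewordsOfWeight C w := by
  rw [numCodewordsOfWeight_eq_card, ← sum_filter, filter_filter, sum_const, smul_eq_mul, mul_comm]

lemma numVectorsCosetExact_succ_one (hC : ∀ c ∈ C, c ≠ 0 → 3 ≤ hammingNorm c) (w : ℕ) :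
    numVectorsCosetExact C (w + 1) 1 =
      (n - w) * (Fintype.card F - 1) * numCodewordsOfWeight C w +
      (w + 1) * (Fintype.card F - 2) * numCodewordsOfWeight C (w + 1) +
      (w + 2) * numCodewordsOfWeight C (w + 2) := by
  classical
  simp only [numVectorsCosetExact_eq_sum (W := 1) hC,
    card_filter_hammingDist_eq_one_hammingNorm, sum_add_distrib, sum_ite_hammingNorm_eq,
    Fintype.card_fin]

end CosetWeight

section MDS

variable {F ι : Type*} [Field F]

section Shortened

/-- The subcode of `C` of the codewords vanishing on `A`, i.e. the shortening of `C` at `A` with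
the zero coordinates kept. -/
def shortenedCode (C : Submodule F (ι → F)) (A : Finset ι) : Submodule F (ι → F) :=
  C ⊓ Submodule.pi (A : Set ι) fun _ => ⊥

/-- The number of codewords of `C` that vanish on `A` and have no zero coordinate in `B`. -/
noncomputable def numCodewordsZeroNonzero (C : Submodule F (ι → F)) (A B : Finset ι) : ℕ :=
  {c | c ∈ shortenedCode C A ∧ ∀ i ∈ B, c i ≠ 0}.ncard

variable {C : Submodule F (ι → F)} {A : Finset ι} {c : ι → F}

lemma mem_shortenedCode : c ∈ shortenedCode C A ↔ c ∈ C ∧ ∀ i ∈ A, c i = 0 := by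
  simp [shortenedCode, Submodule.mem_pi]

variable [Finite ι] (C A)

lemma finrank_le_finrank_shortenedCode_add_card :
    Module.finrank F C ≤ Module.finrank F (shortenedCode C A) + #A := by
  let restrict : C →ₗ[F] (A → F) := LinearMap.funLeft F F (Subtype.val : A → ι) ∘ₗ C.subtype
  have hker : (LinearMap.ker restrict).map C.subtype = shortenedCode C A := by
    ext c
    have hzero (c : C) : restrict c = 0 ↔ ∀ i ∈ A, (c : ι → F) i = 0 := by
      simp [restrict, LinearMap.funLeft, funext_iff]
    simp [mem_shortenedCode, hzero, and_comm]
  have hrange : Module.finrank F (LinearMap.range restrict) ≤ #A := by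
    simpa using Submodule.finrank_le (LinearMap.range restrict)
  rw [← hker, Submodule.finrank_map_subtype_eq, ← restrict.finrank_range_add_finrank_ker, add_comm]
  gcongr

lemma numCodewordsZeroNonzero_empty_right [Fintype F] :
    numCodewordsZeroNonzero C A ∅ = Fintype.card F ^ Module.finrank F (shortenedCode C A) := by
  rw [← Nat.card_eq_fintype_card, ← Module.natCard_eq_pow_finrank]
  simp [numCodewordsZeroNonzero, ← Nat.card_coe_set_eq]

lemma numCodewordsZeroNonzero_insert_add [Finite F] [DecidableEq ι] (B : Finset ι) (b : ι) :
    numCodewordsZeroNonzero C A (insert b B) + numCodewordsZeroNonzero C (insert b A) B =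
      numCodewordsZeroNonzero C A B := by
  have hzero : {c | c ∈ shortenedCode C (insert b A) ∧ ∀ i ∈ B, c i ≠ 0} =
      {c | c ∈ shortenedCode C A ∧ ∀ i ∈ B, c i ≠ 0} ∩ {c | c b = 0} := by
    ext c
    simp only [mem_shortenedCode, forall_mem_insert, Set.mem_inter_iff, Set.mem_ofPred_eq]
    tauto
  have hnonzero : {c | c ∈ shortenedCode C A ∧ ∀ i ∈ insert b B, c i ≠ 0} =
      {c | c ∈ shortenedCode C A ∧ ∀ i ∈ B, c i ≠ 0} \ {c | c b = 0} := by
    ext c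
    simp only [forall_mem_insert, Set.mem_sdiff, Set.mem_ofPred_eq]
    tauto
  rw [numCodewordsZeroNonzero, numCodewordsZeroNonzero, numCodewordsZeroNonzero, hzero, hnonzero,
    add_comm, Set.ncard_inter_add_ncard_sdiff_eq_ncard]

end Shortened

variable [Fintype ι] [DecidableEq F]

/-- `C` is a maximum distance separable code of minimum distance `d`.  The distance is encoded as a
lower bound for the weights, so that the zero code is MDS with `d = n + 1`; for any other code the
Singleton bound makes `d` the minimum distance. -/
structure IsMDSCode (C : Submodule F (ι → F)) (d : ℕ) : Prop where
  le_hammingNorm : ∀ c ∈ C, c ≠ 0 → d ≤ hammingNorm c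
  add_finrank : d + Module.finrank F C = Fintype.card ι + 1

namespace IsMDSCode

variable {C : Submodule F (ι → F)} {d : ℕ}

lemma shortenedCode_eq_bot (hC : IsMDSCode C d) {A : Finset ι} (hA : Module.finrank F C ≤ #A) :
    shortenedCode C A = ⊥ := by
  classical
  refine (Submodule.eq_bot_iff _).2 fun c hc => ?_
  obtain ⟨hcC, hcA⟩ := mem_shortenedCode.1 hc
  by_contra hc0
  have hsupp : hammingNorm c ≤ #Aᶜ :=
    card_le_card fun i hi => mem_compl.2 fun hiA => (mem_filter.1 hi).2 (hcA i hiA)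
  have hdist := hC.le_hammingNorm c hcC hc0
  have hdim := hC.add_finrank
  have hAι := card_le_univ A
  rw [card_compl] at hsupp
  omega

lemma finrank_shortenedCode (hC : IsMDSCode C d) (A : Finset ι) :
    Module.finrank F (shortenedCode C A) = Module.finrank F C - #A := by
  classical
  rcases le_total (Module.finrank F C) #A with hA | hA
  · rw [hC.shortenedCode_eq_bot hA, finrank_bot, Nat.sub_eq_zero_of_le hA]
  have hlower := finrank_le_finrank_shortenedCode_add_card C A
  obtain ⟨K, hAK, hK⟩ := exists_superset_card_eq hA (by simpa using C.finrank_le)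
  have hbot : shortenedCode (shortenedCode C A) (K \ A) = ⊥ := by
    refine eq_bot_iff.2 (le_trans (fun c hc => ?_) (hC.shortenedCode_eq_bot hK.ge).le)
    simp only [mem_shortenedCode, mem_sdiff] at hc ⊢
    exact ⟨hc.1.1, fun i hi => by
      by_cases hiA : i ∈ A
      exacts [hc.1.2 i hiA, hc.2 i ⟨hi, hiA⟩]⟩
  have hupper := finrank_le_finrank_shortenedCode_add_card (shortenedCode C A) (K \ A)
  rw [hbot, finrank_bot, card_sdiff_of_subset hAK, hK] at hupper
  omega

end IsMDSCode

lemma numCodewordsOfWeight_eq_sum_powersetCard [Fintype F] {n : ℕ}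
    (C : Submodule F (Fin n → F)) (w : ℕ) :
    numCodewordsOfWeight C w =
      ∑ S ∈ powersetCard w univ, numCodewordsZeroNonzero C Sᶜ S := by
  classical
  have hmaps : Set.MapsTo (fun c : Fin n → F => univ.filter (c · ≠ 0))
      (univ.filter fun c => c ∈ C ∧ hammingNorm c = w : Finset (Fin n → F))
      (powersetCard w univ : Finset (Finset (Fin n))) := by
    intro c hc
    simpa [mem_powersetCard, hammingNorm] using (mem_filter.1 hc).2.2
  rw [numCodewordsOfWeight_eq_card, card_eq_sum_card_fiberwise hmaps]
  refine sum_congr rfl fun S hS => ?_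
  rw [numCodewordsZeroNonzero, ← Set.ncard_coe_finset]
  congr 1
  ext c
  have hsupport : univ.filter (c · ≠ 0) = S ↔ (∀ i ∈ Sᶜ, c i = 0) ∧ ∀ i ∈ S, c i ≠ 0 := by
    simp only [Finset.ext_iff, mem_filter, mem_univ, true_and, mem_compl]
    grind
  have hweight (h : univ.filter (c · ≠ 0) = S) : hammingNorm c = w := by
    rw [hammingNorm, h, (mem_powersetCard.1 hS).2]
  simp only [filter_filter, coe_filter, mem_univ, true_and, Set.mem_ofPred_eq, mem_shortenedCode]
  tauto

namespace IsMDSCode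

variable [Fintype F]

lemma numCodewordsZeroNonzero_eq {C : Submodule F (ι → F)} {d : ℕ}
    (hC : IsMDSCode C d) {v : ℕ} {A B : Finset ι} (hAB : Disjoint A B) (hB : #B = v + 1) :
    (numCodewordsZeroNonzero C A B : ℤ) =
      (Fintype.card F - 1) * truncBinomSum (Fintype.card F : ℤ) v (Module.finrank F C - #A) := by
  classical
  induction v generalizing A B with
  | zero =>
    obtain ⟨b, rfl⟩ := card_eq_one.1 hB
    have hsplit := numCodewordsZeroNonzero_insert_add C A ∅ b
    simp only [insert_empty_eq, numCodewordsZeroNonzero_empty_right, hC.finrank_shortenedCode,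
      card_insert_of_notMem (disjoint_singleton_right.1 hAB), ← Nat.sub_sub] at hsplit
    rw [sub_one_mul_truncBinomSum_zero_left, eq_sub_iff_add_eq]
    exact_mod_cast hsplit
  | succ v ih =>
    obtain ⟨b, B', hb, rfl, hB'⟩ := card_eq_succ.1 hB
    rw [disjoint_insert_right] at hAB
    have hbAB' : Disjoint (insert b A) B' := disjoint_insert_left.2 ⟨hb, hAB.2⟩
    have hsplit : (numCodewordsZeroNonzero C A (insert b B') : ℤ) =
        numCodewordsZeroNonzero C A B' - numCodewordsZeroNonzero C (insert b A) B' :=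
      eq_sub_of_add_eq (mod_cast numCodewordsZeroNonzero_insert_add C A B' b)
    rw [hsplit, ih hAB.2 hB', ih hbAB' hB', card_insert_of_notMem hAB.1, ← Nat.sub_sub,
      truncBinomSum_succ_left, mul_sub]

lemma numCodewordsOfWeight_succ {n d : ℕ} {C : Submodule F (Fin n → F)} (hC : IsMDSCode C d)
    (v : ℕ) :
    (numCodewordsOfWeight C (v + 1) : ℤ) =
      n.choose (v + 1) *
        ((Fintype.card F - 1) * truncBinomSum (Fintype.card F : ℤ) v (v + 2 - d)) := by
  have hsupport (S : Finset (Fin n)) (hS : S ∈ powersetCard (v + 1) univ) :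
      (numCodewordsZeroNonzero C Sᶜ S : ℤ) =
        (Fintype.card F - 1) * truncBinomSum (Fintype.card F : ℤ) v (v + 2 - d) := by
    have hcard := (mem_powersetCard.1 hS).2
    have hM : Module.finrank F C - #Sᶜ = v + 2 - d := by
      have hdim := hC.add_finrank
      have hSn := card_le_univ S
      rw [card_compl, hcard]
      rw [Fintype.card_fin] at hdim hSn ⊢
      omega
    rw [hC.numCodewordsZeroNonzero_eq disjoint_compl_left hcard, hM]
  rw [numCodewordsOfWeight_eq_sum_powersetCard, Nat.cast_sum, sum_congr rfl hsupport]
  simp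

lemma numVectorsCosetExact_one {n d : ℕ} {C : Submodule F (Fin n → F)} (hC : IsMDSCode C d)
    (hd : 3 ≤ d) (u : ℕ) :
    (numVectorsCosetExact C (u + 2) 1 : ℤ) =
      n.choose (u + 2) * (Fintype.card F - 1) *
        ((u + 2) * (Fintype.card F - 1) * truncBinomSum (Fintype.card F : ℤ) u (u + 2 - d)
          + (u + 2) * (Fintype.card F - 2) *
              truncBinomSum (Fintype.card F : ℤ) (u + 1) (u + 3 - d)
          + (n - (u + 2)) * truncBinomSum (Fintype.card F : ℤ) (u + 2) (u + 4 - d)) := by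
  have hq := Fintype.one_lt_card (α := F)
  have absorb_left : (n.choose (u + 2) : ℤ) * (u + 2) = n.choose (u + 1) * (n - (u + 1) : ℕ) :=
    mod_cast n.choose_succ_right_eq (u + 1)
  have absorb_right : (n.choose (u + 3) : ℤ) * (u + 3) = n.choose (u + 2) * (n - (u + 2)) := by
    simpa [add_assoc] using cast_choose_succ_mul_succ (R := ℤ) n (u + 2)
  rw [numVectorsCosetExact_succ_one fun c hc hc0 => hd.trans (hC.le_hammingNorm c hc hc0)]
  push_cast [hC.numCodewordsOfWeight_succ, Nat.cast_sub hq.le, Nat.cast_sub hq]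
  simp only [add_assoc, Nat.reduceAdd]
  linear_combination
    -((Fintype.card F : ℤ) - 1) ^ 2 * truncBinomSum (Fintype.card F : ℤ) u (u + 2 - d) * absorb_left
    + ((Fintype.card F : ℤ) - 1) * truncBinomSum (Fintype.card F : ℤ) (u + 2) (u + 4 - d) *
        absorb_right

end IsMDSCode

end MDS

/-- Length `n` instead of `q + 1` only adds a correction term proportional to `n - (q + 1)`. -/
theorem numVectorsCosetExact_one_length_q_add_one_general {F : Type*} [Field F] [Fintype F]
    [DecidableEq F] {n d w : ℕ} {C : Submodule F (Fin n → F)} (hC : IsMDSCode C d) (hd : 3 ≤ d)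
    (hdw : d - 1 ≤ w) :
    (numVectorsCosetExact C w 1 : ℤ) =
      n.choose w * (Fintype.card F - 1) *
        ((Fintype.card F : ℤ) ^ (w + 2 - d)
          - ∑ i ∈ range (w + 1 - d),
              (-1) ^ i * ((w.choose (i + 1) : ℤ) - w.choose i) *
                (Fintype.card F : ℤ) ^ (w + 1 - d - i)
          - (-1) ^ (w + d) * (w.choose (d - 1) - w * (w - 2).choose (d - 3))
          + (n - (Fintype.card F + 1)) *
              truncBinomSum (Fintype.card F : ℤ) w (w + 2 - d)) := by
  obtain ⟨u, rfl⟩ : ∃ u, w = u + 2 := ⟨w - 2, by omega⟩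
  obtain ⟨M, hM⟩ : ∃ M, u + 3 = d + M := ⟨u + 3 - d, by omega⟩
  have hsign : (-1 : ℤ) ^ (u + 2 + d) = -(-1) ^ M := by
    have hpow : (-1 : ℤ) ^ (u + 2 + d + 1) = (-1) ^ M := by
      rw [show u + 2 + d + 1 = M + 2 * d by omega, pow_add, pow_mul, neg_one_sq, one_pow, mul_one]
    rw [← hpow, pow_succ, mul_neg_one, neg_neg]
  have hchoose : (u + 2).choose (d - 1) = (u + 2).choose M :=
    Nat.choose_symm_of_eq_add (by omega)
  have hchoose' : u.choose (d - 3) = u.choose M := Nat.choose_symm_of_eq_add (by omega)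
  rw [hC.numVectorsCosetExact_one hd, show u + 2 + 2 - d = M + 1 by omega,
    show u + 3 - d = M by omega, show u + 2 - d = M - 1 by omega,
    truncBinomSum_three_term, pow_succ_sub_sum_choose_sub_choose, hsign, hchoose,
    Nat.add_sub_cancel, hchoose']
  push_cast
  ring

/-- **Integral weight spectrum of the weight-1 cosets of an MDS code of length `q+1`**
(Theorem 4.4(ii), eq. (4.8)).  For a `[q+1,k,d]_q` MDS code with `d ≥ 3` and
`d-1 ≤ w ≤ q+1`,
`A_w^Σ(V^{(1)}) = C(q+1,w)(q-1)[ q^{w+2-d}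
  - ∑_{i=0}^{w-d} (-1)^i (C(w,i+1)-C(w,i)) q^{w+1-d-i}
  - (-1)^{w-d} ( C(w,d-1) - w C(w-2,d-3) ) ]`. -/
theorem numVectorsCosetExact_one_length_q_add_one {F : Type*} [Field F] [Fintype F]
    [DecidableEq F] (q k d w : ℕ) (hq : Fintype.card F = q)
    (C : Submodule F (Fin (q + 1) → F))
    (hk : Module.finrank F C = k) (hmin : HasMinDist C d) (hMDS : d + k = q + 2)
    (hd : 3 ≤ d) (hw1 : d - 1 ≤ w) (hwn : w ≤ q + 1) :
    (numVectorsCosetExact C w 1 : ℤ) =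
      ((q + 1).choose w : ℤ) * ((q : ℤ) - 1) *
        ((q : ℤ) ^ (w + 2 - d)
          - ∑ i ∈ Finset.range (w + 1 - d),
              (-1 : ℤ) ^ i * ((w.choose (i + 1) : ℤ) - (w.choose i : ℤ)) *
                (q : ℤ) ^ (w + 1 - d - i)
          - (-1 : ℤ) ^ (w + d) *
              ((w.choose (d - 1) : ℤ) - (w : ℤ) * ((w - 2).choose (d - 3) : ℤ))) := by
  subst hq hk
  simpa using numVectorsCosetExact_one_length_q_add_one_general
    ⟨hmin.1, by simpa using hMDS⟩ hd hw1
end
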